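/- If q is odd and (q+1)/2 ≤ k ≤ q-1, then the minimum Hamming distance of the puncture code P(C) of the [q^2+1, k, q^2+2-k]_{q^2} Reed-Solomon code C is at most (q+1)(k - (q-1)/2); that is, P(C) contains a nonzero codeword of weight (q+1)(k - (q-1)/2). -/

import Mathlib

/-!
Write `q = 2m + 1`, `k = m + s`, and let `N x = x ^ (q + 1)` be the norm from `𝔽_{q²}` to `𝔽_q`.
For a set `T` of `s` of the `m` nonzero squares of `𝔽_q`, take the codeword
`λ_x = w (N x) * x ^ ((q + 1) / 2)`, where the weight `w` has support `T`; as `N` is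
`(q + 1)`-to-one on nonzero elements, `λ` has weight `(q + 1) s`. Testing `λ` on monomials leads to
the sums of `λ_x * x ^ (i + q * j)` with `i, j < k`. The part over a fibre of `N` is a sum of powers
over a coset of the `(q + 1)`-th roots of unity, so it vanishes unless `i = j ± (q + 1) / 2`. In
those two cases the whole sum is a multiple of a moment `∑ w t * t ^ d` with `0 < d < s`, and
Lagrange interpolation provides a `w` that annihilates these moments.
-/

open Polynomial

/-- The codeword of the (extended) `k`-dimensional Reed-Solomon code of length `q² + 1`
associated to a polynomial `f`: the evaluations of `f` at all elements of the field
(enumerated by `a`), followed by the coefficient of `X^(k-1)` in `f`. -/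
def rsWord (q k : ℕ) {F : Type} [Field F] (a : Fin (q ^ 2) → F)
    (f : Polynomial F) (i : Fin (q ^ 2 + 1)) : F :=
  if hi : (i : ℕ) < q ^ 2 then f.eval (a ⟨(i : ℕ), hi⟩) else f.coeff (k - 1)

/-- The puncture code `P(C)` of the `k`-dimensional Reed-Solomon code `C` of length `q² + 1`
over `F = 𝔽_{q²}`: all vectors `λ` with entries in the subfield `𝔽_q` (i.e. `λ_i^q = λ_i`)
such that `∑ λ_i u_i v_i^q = 0` for all codewords `u, v` of `C`. -/
def puncRS (q k : ℕ) {F : Type} [Field F] [Fintype F] (a : Fin (q ^ 2) → F) :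
    Set (Fin (q ^ 2 + 1) → F) :=
  {lam | (∀ i, lam i ^ q = lam i) ∧
    ∀ f g : Polynomial F, f.degree < (k : WithBot ℕ) → g.degree < (k : WithBot ℕ) →
      ∑ i, lam i * rsWord q k a f i * (rsWord q k a g i) ^ q = 0}

/-- The Hamming weight of a vector: the number of its nonzero coordinates. -/
noncomputable def wt {n : ℕ} {F : Type} [Zero F] (v : Fin n → F) : ℕ :=
  Set.ncard {i | v i ≠ 0}

section Weight

variable {n : ℕ} {F : Type} [Zero F]

lemma ne_zero_of_wt_pos {v : Fin n → F} (hv : 0 < wt v) : v ≠ 0 := by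
  rintro rfl
  simp [wt] at hv

lemma wt_snoc_comp_zero [Fintype F] [DecidableEq F] {a : Fin n → F} (ha : a.Bijective)
    (c : F → F) :
    wt (Fin.snoc (c ∘ a) 0 : Fin (n + 1) → F) = Finset.card {x | c x ≠ 0} := by
  have support_eq : {i | (Fin.snoc (c ∘ a) 0 : Fin (n + 1) → F) i ≠ 0} =
      Fin.castSucc '' (a ⁻¹' {x | c x ≠ 0}) := by
    ext i
    induction i using Fin.lastCases <;> simp
  rw [wt, support_eq, Set.ncard_image_of_injective _ (Fin.castSucc_injective n),
    Set.ncard_preimage_of_injective_subset_range ha.injective (by simp [ha.surjective.range_eq])]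
  simp [← Set.ncard_coe_finset]

end Weight

section Words

variable {q k : ℕ} {F : Type} [Field F] {a : Fin (q ^ 2) → F}

lemma rsWord_castSucc (f : F[X]) (i : Fin (q ^ 2)) : rsWord q k a f i.castSucc = f.eval (a i) := by
  simp [rsWord]

lemma eval_mul_eval_pow_eq_sum {φ : F →+* F} (hφ : ∀ x, φ x = x ^ q) {f g : F[X]}
    (hf : f.degree < k) (hg : g.degree < k) (x : F) :
    f.eval x * g.eval x ^ q = ∑ i ∈ Finset.range k, ∑ j ∈ Finset.range k,
      f.coeff i * g.coeff j ^ q * x ^ (i + q * j) := by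
  have eval_eq {p : F[X]} (hp : p.degree < k) :
      p.eval x = ∑ i ∈ Finset.range k, p.coeff i * x ^ i := by
    rcases eq_or_ne p 0 with rfl | hp0
    · simp
    · exact eval_eq_sum_range' ((natDegree_lt_iff_degree_lt hp0).2 hp) x
  rw [eval_eq hf, eval_eq hg, ← hφ, map_sum, Finset.sum_mul_sum]
  refine Finset.sum_congr rfl fun i _ ↦ Finset.sum_congr rfl fun j _ ↦ ?_
  rw [hφ]
  ring

variable [Fintype F]

lemma snoc_comp_zero_mem_puncRS {φ : F →+* F} (hφ : ∀ x, φ x = x ^ q) (ha : a.Bijective)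
    {c : F → F} (hc : ∀ x, φ (c x) = c x)
    (hsum : ∀ i < k, ∀ j < k, ∑ x, c x * x ^ (i + q * j) = 0) :
    (Fin.snoc (c ∘ a) 0 : Fin (q ^ 2 + 1) → F) ∈ puncRS q k a := by
  constructor
  · refine Fin.lastCases ?_ fun i ↦ ?_
    · rw [Fin.snoc_last, ← hφ, map_zero]
    · rw [Fin.snoc_castSucc, ← hφ, Function.comp_apply, hc]
  · intro f g hf hg
    calc ∑ i, (Fin.snoc (c ∘ a) 0 : Fin (q ^ 2 + 1) → F) i * rsWord q k a f i * rsWord q k a g i ^ q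
        = ∑ i, c (a i) * f.eval (a i) * g.eval (a i) ^ q := by
          simp [Fin.sum_univ_castSucc, rsWord_castSucc]
      _ = ∑ x, c x * (f.eval x * g.eval x ^ q) := by
          simp only [← ha.sum_comp fun x ↦ c x * (f.eval x * g.eval x ^ q), mul_assoc]
      _ = ∑ i ∈ Finset.range k, ∑ j ∈ Finset.range k,
            f.coeff i * g.coeff j ^ q * ∑ x, c x * x ^ (i + q * j) := by
          simp only [eval_mul_eval_pow_eq_sum hφ hf hg, Finset.mul_sum]
          rw [Finset.sum_comm]
          refine Finset.sum_congr rfl fun i _ ↦ ?_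
          rw [Finset.sum_comm]
          simp only [mul_left_comm]
      _ = 0 := Finset.sum_eq_zero fun i hi ↦ Finset.sum_eq_zero fun j hj ↦ by
          rw [hsum i (Finset.mem_range.1 hi) j (Finset.mem_range.1 hj), mul_zero]

end Words

section FiniteField

variable {F : Type*} [Field F] [Fintype F]

lemma exists_ringHom_apply_eq_pow {q r : ℕ} (hq : IsPrimePow q) (hF : Fintype.card F = q ^ r) :
    ∃ φ : F →+* F, ∀ x, φ x = x ^ q := by
  obtain ⟨p, n, hp, -, rfl⟩ := hq
  have : Fact p.Prime := ⟨hp.nat_prime⟩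
  have : CharP F p := charP_of_card_eq_prime_pow (hF.trans (pow_mul p n r).symm)
  exact ⟨iterateFrobenius F p n, iterateFrobenius_def p n⟩

lemma exists_isPrimitiveRoot_card_sub_one : ∃ ζ : F, IsPrimitiveRoot ζ (Fintype.card F - 1) := by
  classical
  obtain ⟨ζ, hζ⟩ := IsCyclic.exists_ofOrder_eq_natCard (α := Fˣ)
  refine ⟨ζ, ?_⟩
  rw [← Fintype.card_units, ← Nat.card_eq_fintype_card, ← hζ, ← orderOf_units]
  exact .orderOf _

end FiniteField

section RootsOfUnity

variable {R : Type*} [CommRing R] [IsDomain R] {ζ t : R} {n d : ℕ}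

lemma exists_pow_eq_of_pow_eq_one (hζ : IsPrimitiveRoot ζ (n * d)) (hn : n ≠ 0) (hd : d ≠ 0)
    (ht : t ^ d = 1) : ∃ y, y ^ n = t := by
  have : NeZero (n * d) := ⟨mul_ne_zero hn hd⟩
  obtain ⟨i, -, rfl⟩ := hζ.eq_pow_of_pow_eq_one (ξ := t) (by rw [mul_comm, pow_mul, ht, one_pow])
  rw [← pow_mul, hζ.pow_eq_one_iff_dvd] at ht
  obtain ⟨c, rfl⟩ := Nat.dvd_of_mul_dvd_mul_right (Nat.pos_of_ne_zero hd) ht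
  exact ⟨ζ ^ c, by rw [← pow_mul, mul_comm]⟩

lemma card_nthRootsFinset_of_pow_eq_one (hζ : IsPrimitiveRoot ζ (n * d)) (hn : n ≠ 0) (hd : d ≠ 0)
    (ht : t ^ d = 1) : (nthRootsFinset n t).card = n := by
  classical
  have ht0 : t ≠ 0 := by rintro rfl; simp [hd] at ht
  have hζd : IsPrimitiveRoot (ζ ^ d) n := hζ.pow (by positivity) (mul_comm n d)
  rw [nthRootsFinset_def, Multiset.toFinset_card_of_nodup (hζd.nthRoots_nodup ht0),
    hζd.card_nthRoots, if_pos (exists_pow_eq_of_pow_eq_one hζ hn hd ht)]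

lemma sum_nthRootsFinset_pow_eq_zero_of_not_dvd (hζ : IsPrimitiveRoot ζ n) (hd : ¬ n ∣ d) :
    ∑ x ∈ nthRootsFinset n t, x ^ d = 0 := by
  rcases n.eq_zero_or_pos with rfl | hn
  · simp
  have rotate : ∑ x ∈ nthRootsFinset n t, x ^ d = ζ ^ d * ∑ x ∈ nthRootsFinset n t, x ^ d := by
    rw [Finset.mul_sum]
    refine (Finset.sum_equiv (hζ.isUnit hn.ne').unit.mulLeft (fun x ↦ ?_) fun x _ ↦ ?_).symm
    · simp [mem_nthRootsFinset hn, mul_pow, hζ.pow_eq_one]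
    · simp [mul_pow]
  have hne : ζ ^ d ≠ 1 := mt (hζ.pow_eq_one_iff_dvd d).1 hd
  exact by_contra fun hsum ↦ hne (mul_eq_right₀ hsum |>.1 rotate.symm)

lemma sum_nthRootsFinset_pow_mul (n : ℕ) (t : R) (d : ℕ) :
    ∑ x ∈ nthRootsFinset n t, x ^ (n * d) = (nthRootsFinset n t).card * t ^ d := by
  rcases n.eq_zero_or_pos with rfl | hn
  · simp
  rw [← nsmul_eq_mul]
  refine Finset.sum_eq_card_nsmul fun x hx ↦ ?_
  rw [pow_mul, (mem_nthRootsFinset hn t).1 hx]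

lemma exists_finset_card_eq_forall_pow_eq_one {s : ℕ} (hζ : IsPrimitiveRoot ζ n) (hn : 0 < n)
    (hs : s ≤ n) : ∃ T : Finset R, T.card = s ∧ ∀ t ∈ T, t ^ n = 1 := by
  obtain ⟨T, hT, hTs⟩ := Finset.exists_subset_card_eq (hs.trans_eq hζ.card_nthRootsFinset.symm)
  exact ⟨T, hTs, fun t ht ↦ (mem_nthRootsFinset hn 1).1 (hT ht)⟩

end RootsOfUnity

section Fibres

variable {K : Type*} [Field K] [Fintype K]

lemma filter_pow_eq_eq_nthRootsFinset [DecidableEq K] {n : ℕ} (hn : 0 < n) (t : K) :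
    ({x | x ^ n = t} : Finset K) = nthRootsFinset n t := by
  ext x
  simp [mem_nthRootsFinset hn]

lemma sum_comp_pow_mul_pow {T : Finset K} {n : ℕ} (hn : 0 < n) {w : K → K}
    (hw : ∀ t ∉ T, w t = 0) (e : ℕ) :
    ∑ x, w (x ^ n) * x ^ e = ∑ t ∈ T, w t * ∑ x ∈ nthRootsFinset n t, x ^ e := by
  have := Classical.decEq K
  calc ∑ x, w (x ^ n) * x ^ e = ∑ t, ∑ x with x ^ n = t, w (x ^ n) * x ^ e :=
        (Finset.sum_fiberwise _ _ _).symm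
    _ = ∑ t, w t * ∑ x ∈ nthRootsFinset n t, x ^ e := by
        refine Finset.sum_congr rfl fun t _ ↦ ?_
        rw [filter_pow_eq_eq_nthRootsFinset hn, Finset.mul_sum]
        exact Finset.sum_congr rfl fun x hx ↦ by rw [(mem_nthRootsFinset hn t).1 hx]
    _ = ∑ t ∈ T, w t * ∑ x ∈ nthRootsFinset n t, x ^ e :=
        (Finset.sum_subset T.subset_univ fun t _ ht ↦ by rw [hw t ht, zero_mul]).symm

end Fibres

section MomentWeight

variable {K : Type*} [Field K]

lemma sum_nodalWeight_mul_pow_eq_zero {ι : Type*} [DecidableEq ι] {s : Finset ι} {v : ι → K}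
    (hv : Set.InjOn v s) {d : ℕ} (hd : d + 1 < s.card) :
    ∑ i ∈ s, Lagrange.nodalWeight s v i * v i ^ d = 0 := by
  have hdeg : ((X : K[X]) ^ d).degree < s.card := by
    rw [degree_X_pow]
    exact_mod_cast d.lt_succ_self.trans hd
  calc ∑ i ∈ s, Lagrange.nodalWeight s v i * v i ^ d = ((X : K[X]) ^ d).coeff (s.card - 1) := by
        simp [Lagrange.coeff_eq_sum hv hdeg, Lagrange.nodalWeight, div_eq_inv_mul]
    _ = 0 := by rw [coeff_X_pow, if_neg (by lia)]

variable [DecidableEq K] {T : Finset K} {t : K}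

/-- Weights with support `T` that annihilate the moments `∑ t ∈ T, w t * t ^ d`
for `0 < d < #T`. The nodal weights of Lagrange interpolation annihilate those with
`0 ≤ d < #T - 1`, and the division by `t` shifts this range by one. -/
noncomputable def momentWeight (T : Finset K) : K → K :=
  (T : Set K).indicator fun t ↦ Lagrange.nodalWeight T id t / t

lemma momentWeight_ne_zero_iff (h0 : 0 ∉ T) : momentWeight T t ≠ 0 ↔ t ∈ T := by
  simp only [momentWeight, Set.indicator_apply_ne_zero, Set.mem_inter_iff, Finset.mem_coe,
    Function.mem_support, and_iff_left_iff_imp]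
  exact fun ht ↦ div_ne_zero (Lagrange.nodalWeight_ne_zero Function.injective_id.injOn ht)
    (ne_of_mem_of_not_mem ht h0)

lemma sum_momentWeight_mul_pow_eq_zero (h0 : 0 ∉ T) {d : ℕ} (hd0 : 0 < d) (hd : d < T.card) :
    ∑ t ∈ T, momentWeight T t * t ^ d = 0 := by
  obtain ⟨d, rfl⟩ := Nat.exists_eq_succ_of_ne_zero hd0.ne'
  rw [← sum_nodalWeight_mul_pow_eq_zero (K := K) (v := id) Function.injective_id.injOn hd]
  refine Finset.sum_congr rfl fun t ht ↦ ?_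
  have ht0 : t ≠ 0 := ne_of_mem_of_not_mem ht h0
  rw [momentWeight, Set.indicator_of_mem (Finset.mem_coe.2 ht), id, pow_succ', ← mul_assoc,
    div_mul_cancel₀ _ ht0]

lemma map_momentWeight {φ : K →+* K} (hφ : ∀ t ∈ T, φ t = t) (t : K) :
    φ (momentWeight T t) = momentWeight T t := by
  by_cases ht : t ∈ T
  · rw [momentWeight, Set.indicator_of_mem (Finset.mem_coe.2 ht), Lagrange.nodalWeight, map_div₀,
      map_prod, hφ t ht]
    congr 1
    refine Finset.prod_congr rfl fun u hu ↦ ?_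
    simp [hφ t ht, hφ u (Finset.mem_of_mem_erase hu)]
  · rw [momentWeight, Set.indicator_of_notMem (Finset.mem_coe.not.2 ht), map_zero]

end MomentWeight

lemma exists_exponent_eq_of_dvd {m s i j : ℕ} (hsm : s ≤ m) (hi : i < m + s) (hj : j < m + s)
    (hdvd : 2 * (m + 1) ∣ i + (2 * m + 1) * j + (m + 1)) :
    ∃ d, 0 < d ∧ d < s ∧ (i + (2 * m + 1) * j + (m + 1) = 2 * (m + 1) * d ∨
      i + (2 * m + 1) * j + (m + 1) = 2 * (m + 1) * (d + m)) := by
  have hcase : i = j + (m + 1) ∨ j = i + (m + 1) := by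
    -- The exponent is `2 * (m + 1) * j + (i - j + m + 1)`, where `|i - j| < 2 * m`.
    obtain ⟨c, hc⟩ := hdvd
    have hlower : j ≤ c := by by_contra! h; nlinarith
    have hupper : c < j + 2 := by by_contra! h; nlinarith
    obtain rfl | rfl : c = j ∨ c = j + 1 := by lia
    · right; linarith
    · left; linarith
  rcases hcase with rfl | rfl
  · exact ⟨j + 1, by lia, by lia, .inl (by ring)⟩
  · exact ⟨i + 1, by lia, by lia, .inr (by ring)⟩

section NormWord

variable {K : Type*} [Field K] {m : ℕ} {T : Finset K}

lemma zero_notMem_of_forall_pow_eq_one (hm : m ≠ 0) (hT : ∀ t ∈ T, t ^ m = 1) : 0 ∉ T :=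
  fun h ↦ by simpa [hm] using hT 0 h

variable [DecidableEq K]

/-- The codeword `λ_x = w (N x) * x ^ ((q + 1) / 2)` of the puncture code, indexed by the elements
of the field, where `q = 2 * m + 1`, `N x = x ^ (q + 1)` is the norm to `𝔽_q` and `w` is the moment
weight of a set `T` of nonzero squares of `𝔽_q`. -/
noncomputable def normWord (m : ℕ) (T : Finset K) (x : K) : K :=
  momentWeight T (x ^ (2 * (m + 1))) * x ^ (m + 1)

lemma normWord_ne_zero_iff (h0 : 0 ∉ T) {x : K} : normWord m T x ≠ 0 ↔ x ^ (2 * (m + 1)) ∈ T := by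
  rw [normWord, mul_ne_zero_iff, momentWeight_ne_zero_iff h0, and_iff_left_iff_imp]
  intro hx hx0
  rw [mul_comm, pow_mul, hx0, zero_pow two_ne_zero] at hx
  exact h0 hx

lemma map_normWord {φ : K →+* K} (hφ : ∀ x, φ x = x ^ (2 * m + 1)) (hT : ∀ t ∈ T, t ^ m = 1)
    (x : K) : φ (normWord m T x) = normWord m T x := by
  by_cases hx : x ^ (2 * (m + 1)) ∈ T
  · have hφT : ∀ t ∈ T, φ t = t := fun t ht ↦ by
      rw [hφ, pow_succ, mul_comm 2 m, pow_mul, hT t ht, one_pow, one_mul]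
    have hφx : φ (x ^ (m + 1)) = x ^ (m + 1) := by
      calc φ (x ^ (m + 1)) = (x ^ (2 * (m + 1))) ^ m * x ^ (m + 1) := by rw [hφ]; ring
        _ = x ^ (m + 1) := by rw [hT _ hx, one_mul]
    rw [normWord, map_mul, map_momentWeight hφT, hφx]
  · simp [normWord, momentWeight, hx]

variable [Fintype K] {ζ : K}

lemma card_filter_normWord_ne_zero (hζ : IsPrimitiveRoot ζ (2 * (m + 1) * (2 * m))) (hm : m ≠ 0)
    (hT : ∀ t ∈ T, t ^ m = 1) :
    Finset.card {x | normWord m T x ≠ 0} = 2 * (m + 1) * T.card := by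
  have h0 : 0 ∉ T := zero_notMem_of_forall_pow_eq_one hm hT
  simp only [normWord_ne_zero_iff h0]
  rw [mul_comm _ T.card, ← smul_eq_mul T.card, ← Finset.sum_const,
    Finset.card_eq_sum_card_fiberwise (f := (· ^ (2 * (m + 1)))) (t := T) (by simp [Set.MapsTo])]
  refine Finset.sum_congr rfl fun t ht ↦ ?_
  have fiber_eq : ({x ∈ {x : K | x ^ (2 * (m + 1)) ∈ T} | x ^ (2 * (m + 1)) = t} : Finset K) =
      nthRootsFinset (2 * (m + 1)) t := by
    rw [← filter_pow_eq_eq_nthRootsFinset (by positivity)]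
    ext x
    aesop
  rw [fiber_eq, card_nthRootsFinset_of_pow_eq_one hζ (by positivity) (by positivity)
    (by rw [mul_comm, pow_mul, hT t ht, one_pow])]

lemma sum_normWord_mul_pow_eq_zero {i j : ℕ} (hζ : IsPrimitiveRoot ζ (2 * (m + 1) * (2 * m)))
    (hm : m ≠ 0) (hT : ∀ t ∈ T, t ^ m = 1) (hcard : T.card ≤ m) (hi : i < m + T.card)
    (hj : j < m + T.card) :
    ∑ x, normWord m T x * x ^ (i + (2 * m + 1) * j) = 0 := by
  have h0 : 0 ∉ T := zero_notMem_of_forall_pow_eq_one hm hT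
  have hT' : ∀ t ∈ T, t ^ (2 * m) = 1 := fun t ht ↦ by rw [mul_comm, pow_mul, hT t ht, one_pow]
  have fiberwise : ∑ x, normWord m T x * x ^ (i + (2 * m + 1) * j) =
      ∑ t ∈ T, momentWeight T t *
        ∑ x ∈ nthRootsFinset (2 * (m + 1)) t, x ^ (i + (2 * m + 1) * j + (m + 1)) := by
    rw [← sum_comp_pow_mul_pow (by positivity) fun t ht ↦
      not_ne_iff.1 (mt (momentWeight_ne_zero_iff h0).1 ht)]
    exact Finset.sum_congr rfl fun x _ ↦ by rw [normWord]; ring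
  rw [fiberwise]
  by_cases hdvd : 2 * (m + 1) ∣ i + (2 * m + 1) * j + (m + 1)
  · obtain ⟨d, hd0, hd, hexp⟩ := exists_exponent_eq_of_dvd hcard hi hj hdvd
    have fiber_sum : ∀ t ∈ T, ∑ x ∈ nthRootsFinset (2 * (m + 1)) t,
        x ^ (i + (2 * m + 1) * j + (m + 1)) = (2 * (m + 1) : ℕ) * t ^ d := fun t ht ↦ by
      rcases hexp with hexp | hexp
      all_goals rw [hexp, sum_nthRootsFinset_pow_mul,
        card_nthRootsFinset_of_pow_eq_one hζ (by positivity) (by positivity) (hT' t ht)]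
      rw [pow_add, hT t ht, mul_one]
    calc ∑ t ∈ T, momentWeight T t * ∑ x ∈ nthRootsFinset (2 * (m + 1)) t,
            x ^ (i + (2 * m + 1) * j + (m + 1))
        = (2 * (m + 1) : ℕ) * ∑ t ∈ T, momentWeight T t * t ^ d := by
          rw [Finset.mul_sum]
          exact Finset.sum_congr rfl fun t ht ↦ by rw [fiber_sum t ht, mul_left_comm]
      _ = 0 := by rw [sum_momentWeight_mul_pow_eq_zero h0 hd0 hd, mul_zero]
  · have hζn : IsPrimitiveRoot (ζ ^ (2 * m)) (2 * (m + 1)) :=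
      hζ.pow (by positivity) (mul_comm _ _)
    simp [sum_nthRootsFinset_pow_eq_zero_of_not_dvd hζn hdvd]

end NormWord

/-- If `q` is odd and `(q+1)/2 ≤ k ≤ q-1`, then the minimum Hamming distance
of the puncture code `P(C)` of the `[q²+1, k, q²+2-k]_{q²}` Reed-Solomon code `C` is at most
`(q+1)(k - (q-1)/2)`: `P(C)` contains a nonzero codeword of weight `(q+1)(k - (q-1)/2)`. -/
theorem puncture_RS_weight_upper_q_odd
    (q k : ℕ) (hq : IsPrimePow q) (hodd : Odd q) (hk1 : q + 1 ≤ 2 * k) (hk2 : k ≤ q - 1)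
    (F : Type) [Field F] [Fintype F] (hF : Fintype.card F = q ^ 2)
    (a : Fin (q ^ 2) → F) (ha : Function.Bijective a) :
    ∃ lam ∈ puncRS q k a, lam ≠ 0 ∧ wt lam = (q + 1) * (k - (q - 1) / 2) := by
  classical
  obtain ⟨φ, hφ⟩ := exists_ringHom_apply_eq_pow hq hF
  obtain ⟨m, rfl⟩ := hodd
  have hm : m ≠ 0 := by lia
  obtain ⟨ζ, hζ⟩ := exists_isPrimitiveRoot_card_sub_one (F := F)
  have hcard : Fintype.card F - 1 = 2 * (m + 1) * (2 * m) :=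
    Nat.sub_eq_of_eq_add (hF.trans (by ring))
  rw [hcard] at hζ
  have hζm : IsPrimitiveRoot (ζ ^ (4 * (m + 1))) m := hζ.pow (by positivity) (by ring)
  obtain ⟨T, hTk, hT⟩ := exists_finset_card_eq_forall_pow_eq_one (s := k - m) hζm
    (Nat.pos_of_ne_zero hm) (by lia)
  have hwt : wt (Fin.snoc (normWord m T ∘ a) 0 : Fin ((2 * m + 1) ^ 2 + 1) → F) =
      (2 * m + 1 + 1) * (k - (2 * m + 1 - 1) / 2) := by
    rw [wt_snoc_comp_zero ha, card_filter_normWord_ne_zero hζ hm hT, hTk]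
    congr 1
    lia
  refine ⟨_, snoc_comp_zero_mem_puncRS hφ ha (map_normWord hφ hT) fun i hi j hj ↦ ?_, ?_, hwt⟩
  · exact sum_normWord_mul_pow_eq_zero hζ hm hT (by lia) (by lia) (by lia)
  · exact ne_zero_of_wt_pos (hwt ▸ Nat.mul_pos (by lia) (by lia))
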